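/- A λI-term M admits a derivation Γ;Δ ⊢ M : α for some environment Γ;Δ and some simple type α in the multi-type system for the λI-calculus if and only if M has a head normal form (i.e., M head-reduces to a term of the shape λx₁…xₙ.y M₁⋯Mₖ). -/

import Mathlib

set_option maxHeartbeats 1000000

/-! # λ-terms (named variables over ℕ) -/

inductive Lam : Type
  | var : ℕ → Lam
  | app : Lam → Lam → Lam
  | lam : ℕ → Lam → Lam
deriving DecidableEq

namespace Lam

/-- Free variables of a λ-term. -/
def fv : Lam → Finset ℕ
  | var x => {x}
  | app M N => M.fv ∪ N.fv
  | lam x M => M.fv.erase x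

/-- λI-terms: every abstraction `λx.M` satisfies `x ∈ fv M`. -/
def IsI : Lam → Prop
  | var _ => True
  | app M N => M.IsI ∧ N.IsI
  | lam x M => x ∈ M.fv ∧ M.IsI

/-- A variable not belonging to a given finite set. -/
def freshVar (s : Finset ℕ) : ℕ := (s.sup id) + 1

/-- Capture-avoiding simultaneous substitution (bound variables are freshened). -/
def substF : Lam → (ℕ → Lam) → Lam
  | var x, σ => σ x
  | app M N, σ => app (M.substF σ) (N.substF σ)
  | lam x M, σ =>
      let y := freshVar ((M.fv.erase x).biUnion fun z => (σ z).fv)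
      lam y (M.substF (Function.update σ x (var y)))

/-- Capture-avoiding substitution `M[N/x]`. -/
def subst (M : Lam) (x : ℕ) (N : Lam) : Lam :=
  M.substF fun z => if z = x then N else var z

/-- Being an abstraction. -/
def isAbs : Lam → Prop
  | lam _ _ => True
  | _ => False

end Lam

/-- One-step β-reduction. -/
inductive Beta : Lam → Lam → Prop
  | beta (x : ℕ) (M N : Lam) : Beta (.app (.lam x M) N) (M.subst x N)
  | appL {M M' : Lam} (N : Lam) : Beta M M' → Beta (.app M N) (.app M' N)
  | appR {N N' : Lam} (M : Lam) : Beta N N' → Beta (.app M N) (.app M N')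
  | lam (x : ℕ) {M M' : Lam} : Beta M M' → Beta (.lam x M) (.lam x M')

/-- One-step head reduction. -/
inductive Head : Lam → Lam → Prop
  | beta (x : ℕ) (M N : Lam) : Head (.app (.lam x M) N) (M.subst x N)
  | app {M M' : Lam} (N : Lam) : ¬ M.isAbs → Head M M' → Head (.app M N) (.app M' N)
  | lam (x : ℕ) {M M' : Lam} : Head M M' → Head (.lam x M) (.lam x M')

/-- Iterated head reduction. -/
def HeadStar : Lam → Lam → Prop := Relation.ReflTransGen Head

/-- Terms of the shape `y M₁ ⋯ Mₖ`. -/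
inductive Neutral : Lam → Prop
  | var (x : ℕ) : Neutral (.var x)
  | app {M : Lam} (N : Lam) : Neutral M → Neutral (.app M N)

/-- Head normal forms `λx₁…xₙ.y M₁ ⋯ Mₖ`. -/
inductive Hnf : Lam → Prop
  | neutral {M : Lam} : Neutral M → Hnf M
  | lam (x : ℕ) {M : Lam} : Hnf M → Hnf (.lam x M)

/-- `M` has a head normal form. -/
def HasHnf (M : Lam) : Prop := ∃ H, HeadStar M H ∧ Hnf H

/-! # Multi-types -/

/-- Simple types: atoms `a ∈ ℕ`, arrows `[]_X → β` and `[α₀,…,αₙ] → β`. -/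
inductive STy : Type
  | atom : ℕ → STy
  | arr0 : Finset ℕ → STy → STy
  | arrP : STy → List STy → STy → STy

/-- Multiset types: the annotated empty multiset `[]_X` or a
non-empty multiset `[α₀,…,αₙ]` (head plus tail). -/
inductive MTy : Type
  | empty : Finset ℕ → MTy
  | mk : STy → List STy → MTy

/-- The arrow type `ᾱ → β`. -/
def MTy.arr : MTy → STy → STy
  | .empty X, β => .arr0 X β
  | .mk α l, β => .arrP α l β

/-- The underlying multiset of simple types of a multiset type. -/
def MTy.toM : MTy → Multiset STy
  | .empty _ => 0
  | .mk α l => α ::ₘ (l : Multiset STy)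

/-- Multi-types: `σ ::= e_X | α`. -/
inductive OTy : Type
  | esum : Finset ℕ → OTy
  | simple : STy → OTy

mutual
/-- Atoms occurring in a simple type. -/
def STy.atoms : STy → Finset ℕ
  | .atom a => {a}
  | .arr0 _ β => β.atoms
  | .arrP α l β => α.atoms ∪ STy.atomsL l ∪ β.atoms
def STy.atomsL : List STy → Finset ℕ
  | [] => ∅
  | α :: l => α.atoms ∪ STy.atomsL l
end

/-! # Environments -/

/-- Type environments: finitely supported maps from variables
to finite multisets of simple types; added pointwise. -/
abbrev TEnv := ℕ →₀ Multiset STy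

/-- Variable environments: finite partial maps from variables to finite
sets of variables. -/
abbrev VEnv := Finmap (fun _ : ℕ => Finset ℕ)

namespace VEnv

/-- `⋃Δ`: the union of the values of `Δ`. -/
def uni (Δ : VEnv) : Finset ℕ :=
  Δ.keys.biUnion fun x => (Δ.lookup x).getD ∅

/-- Coherence `Δ₀ ≍ Δ₁`: agreement on the common domain. -/
def Coh (Δ₀ Δ₁ : VEnv) : Prop :=
  ∀ x : ℕ, x ∈ Δ₀ → x ∈ Δ₁ → Δ₀.lookup x = Δ₁.lookup x

end VEnv

/-! # The multi-type system for the λI-calculus -/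

mutual
/-- Typing judgement `Γ; Δ ⊢ M : σ`. -/
inductive Der : TEnv → VEnv → Lam → OTy → Prop
  | esum {Δ : VEnv} {M : Lam} :
      Δ.keys = M.fv → Der 0 Δ M (.esum Δ.uni)
  | ax (x : ℕ) (α : STy) (X : Finset ℕ) :
      Der (Finsupp.single x {α}) (Finmap.singleton x X) (.var x) (.simple α)
  | app {Γ₀ Γ₁ : TEnv} {Δ₀ Δ₁ : VEnv} {M N : Lam} {m : MTy} {β : STy} :
      Der Γ₀ Δ₀ M (.simple (m.arr β)) → DerB Γ₁ Δ₁ N m → VEnv.Coh Δ₀ Δ₁ →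
      Der (Γ₀ + Γ₁) (Δ₀ ∪ Δ₁) (.app M N) (.simple β)
  | lam0 {Γ : TEnv} {Δ : VEnv} {x : ℕ} {X : Finset ℕ} {M : Lam} {β : STy} :
      Γ x = 0 → x ∉ Δ → Der Γ (Δ.insert x X) M (.simple β) →
      Der Γ Δ (.lam x M) (.simple (.arr0 X β))
  | lamP {Γ : TEnv} {Δ : VEnv} {x : ℕ} {X : Finset ℕ} {M : Lam} {α : STy}
      {l : List STy} {β : STy} :
      Γ x = 0 → x ∉ Δ →
      Der (Γ + Finsupp.single x (MTy.mk α l).toM) (Δ.insert x X) M (.simple β) →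
      Der Γ Δ (.lam x M) (.simple (.arrP α l β))

/-- Typing judgement `Γ; Δ ⊢! M : ᾱ`. -/
inductive DerB : TEnv → VEnv → Lam → MTy → Prop
  | bang0 {Δ : VEnv} {M : Lam} :
      Δ.keys = M.fv → DerB 0 Δ M (.empty Δ.uni)
  | one {Γ : TEnv} {Δ : VEnv} {M : Lam} {α : STy} :
      Der Γ Δ M (.simple α) → DerB Γ Δ M (.mk α [])
  | cons {Γ₀ Γ₁ : TEnv} {Δ : VEnv} {M : Lam} {α α' : STy} {l : List STy} :
      Der Γ₀ Δ M (.simple α) → DerB Γ₁ Δ M (.mk α' l) →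
      DerB (Γ₀ + Γ₁) Δ M (.mk α (α' :: l))
end

/-- The multi-type interpretation `⟦M⟧`. -/
def interp (M : Lam) : Set (TEnv × VEnv × OTy) :=
  { p | Der p.1 p.2.1 M p.2.2 }

/-! # Ohana trees (coinductive equality, as a greatest fixpoint) -/

/-- Matching of the spines `y M₁ ⋯ Mₖ` of two head normal forms:
same head variable, same number of arguments, arguments related by `R`. -/
inductive SpineMatch (R : Lam → Lam → Prop) : Lam → Lam → Prop
  | var (y : ℕ) : SpineMatch R (.var y) (.var y)
  | app {P Q M N : Lam} : SpineMatch R P Q → R M N →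
      SpineMatch R (.app P M) (.app Q N)

/-- Matching of two head normal forms, comparing abstraction prefixes
up to renaming of the bound variables. -/
inductive HnfMatch (R : Lam → Lam → Prop) : Lam → Lam → Prop
  | base {P Q : Lam} : SpineMatch R P Q → HnfMatch R P Q
  | lam {x y : ℕ} {P Q : Lam} :
      (∀ z : ℕ, z ∉ (P.fv.erase x ∪ Q.fv.erase y) →
        HnfMatch R (P.subst x (.var z)) (Q.subst y (.var z))) →
      HnfMatch R (.lam x P) (.lam y Q)

/-- `R` is an Ohana-tree bisimulation. -/
def OTBisim (R : Lam → Lam → Prop) : Prop :=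
  ∀ M N, R M N →
    (¬ HasHnf M ∧ ¬ HasHnf N ∧ M.fv = N.fv) ∨
    (∃ P Q, HeadStar M P ∧ HeadStar N Q ∧ Hnf P ∧ Hnf Q ∧ HnfMatch R P Q)

/-- Equality of Ohana trees: `OT(M) = OT(N)`. -/
def OTEq (M N : Lam) : Prop := ∃ R, OTBisim R ∧ R M N

/-! # λI-resource terms -/

mutual
inductive RTm : Type
  | var : ℕ → RTm
  | lam : ℕ → RTm → RTm
  | app : RTm → RBag → RTm
inductive RBag : Type
  | empty : Finset ℕ → RBag
  | mk : RTm → List RTm → RBag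
end

noncomputable instance : DecidableEq RTm := fun _ _ => Classical.dec _
noncomputable instance : DecidableEq RBag := fun _ _ => Classical.dec _

mutual
/-- Free variables of a resource term. -/
def RTm.fv : RTm → Finset ℕ
  | .var x => {x}
  | .lam x s => s.fv.erase x
  | .app s b => s.fv ∪ b.fv
/-- Free variables of a bag. -/
def RBag.fv : RBag → Finset ℕ
  | .empty X => X
  | .mk h t => h.fv ∪ RTm.fvL t
/-- Free variables of a list of resource terms. -/
def RTm.fvL : List RTm → Finset ℕ
  | [] => ∅
  | h :: t => h.fv ∪ RTm.fvL t
end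

mutual
/-- λI-resource terms: in every abstraction `λx.s`, `x` occurs free in `s`. -/
inductive RTm.IsIr : RTm → Prop
  | var (x : ℕ) : RTm.IsIr (.var x)
  | lam {x : ℕ} {s : RTm} : x ∈ s.fv → RTm.IsIr s → RTm.IsIr (.lam x s)
  | app {s : RTm} {b : RBag} : RTm.IsIr s → RBag.IsIr b → RTm.IsIr (.app s b)
inductive RBag.IsIr : RBag → Prop
  | empty (X : Finset ℕ) : RBag.IsIr (.empty X)
  | mk {h : RTm} {t : List RTm} : RTm.IsIr h → (∀ u ∈ t, RTm.IsIr u) →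
      RBag.IsIr (.mk h t)
end

/-- The list of elements of a bag. -/
def RBag.toList : RBag → List RTm
  | .empty _ => []
  | .mk h t => h :: t

/-! Linear (bijective) substitution: `LSub s x ts t` means that `t` is obtained
by substituting the elements of the list `ts` for the free occurrences of `x`
in `s`, in left-to-right order (annotations of empty bags absorb). -/
mutual
inductive LSub : RTm → ℕ → List RTm → RTm → Prop
  | var_hit (x : ℕ) (t : RTm) : LSub (.var x) x [t] t
  | var_miss {x y : ℕ} : y ≠ x → LSub (.var y) x [] (.var y)
  | lam {x y : ℕ} {s : RTm} {ts : List RTm} {s' : RTm} :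
      y ≠ x → y ∉ RTm.fvL ts → LSub s x ts s' →
      LSub (.lam y s) x ts (.lam y s')
  | app {s : RTm} {b : RBag} {x : ℕ} {ts₁ ts₂ : List RTm} {s' : RTm} {b' : RBag} :
      LSub s x ts₁ s' → LSubB b x ts₂ b' →
      LSub (.app s b) x (ts₁ ++ ts₂) (.app s' b')
inductive LSubB : RBag → ℕ → List RTm → RBag → Prop
  | empty_hit {X : Finset ℕ} {x : ℕ} {ts : List RTm} :
      x ∈ X → LSubB (.empty X) x ts (.empty ((X.erase x) ∪ RTm.fvL ts))
  | empty_miss {X : Finset ℕ} {x : ℕ} :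
      x ∉ X → LSubB (.empty X) x [] (.empty X)
  | mk {h : RTm} {t : List RTm} {x : ℕ} {ts₁ ts₂ : List RTm} {h' : RTm}
      {t' : List RTm} :
      LSub h x ts₁ h' → LSubL t x ts₂ t' →
      LSubB (.mk h t) x (ts₁ ++ ts₂) (.mk h' t')
inductive LSubL : List RTm → ℕ → List RTm → List RTm → Prop
  | nil (x : ℕ) : LSubL [] x [] []
  | cons {h : RTm} {t : List RTm} {x : ℕ} {ts₁ ts₂ : List RTm} {h' : RTm}
      {t' : List RTm} :
      LSub h x ts₁ h' → LSubL t x ts₂ t' →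
      LSubL (h :: t) x (ts₁ ++ ts₂) (h' :: t')
end

/-- The root resource reduction step `(λx.s)b →r T`:
`T` is the sum of all results of bijective substitution of the elements
of `b` for the free occurrences of `x` in `s`. -/
def RootRed (x : ℕ) (s : RTm) (b : RBag) (T : Finset RTm) : Prop :=
  ∀ u : RTm, u ∈ T ↔ ∃ l : List RTm, l.Perm b.toList ∧ LSub s x l u

/-- Pushing an element on top of a bag. -/
def RBag.push (h : RTm) : RBag → RBag
  | .empty _ => .mk h []
  | .mk h' t => .mk h (h' :: t)

mutual
/-- One-step resource reduction of a term to a finite sum. -/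
inductive RStep : RTm → Finset RTm → Prop
  | root {x : ℕ} {s : RTm} {b : RBag} {T : Finset RTm} :
      RootRed x s b T → RStep (.app (.lam x s) b) T
  | appL {s : RTm} {T : Finset RTm} {b : RBag} :
      RStep s T → RStep (.app s b) (T.image fun s' => .app s' b)
  | appB {s : RTm} {b : RBag} {Tb : Finset RBag} :
      RStepB b Tb → RStep (.app s b) (Tb.image fun b' => .app s b')
  | lam {x : ℕ} {s : RTm} {T : Finset RTm} :
      RStep s T → RStep (.lam x s) (T.image fun s' => .lam x s')
/-- One-step resource reduction inside a bag. -/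
inductive RStepB : RBag → Finset RBag → Prop
  | head {h : RTm} {t : List RTm} {T : Finset RTm} :
      RStep h T → RStepB (.mk h t) (T.image fun h' => .mk h' t)
  | tail {h h₂ : RTm} {t : List RTm} {B : Finset RBag} :
      RStepB (.mk h₂ t) B → RStepB (.mk h (h₂ :: t)) (B.image (RBag.push h))
end

/-- One-step resource reduction on finite sums (linear extension). -/
inductive RRed : Finset RTm → Finset RTm → Prop
  | step {S : Finset RTm} {s : RTm} {T : Finset RTm} :
      s ∈ S → RStep s T → RRed S ((S.erase s) ∪ T)

/-- `→r*`. -/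
def RRedStar : Finset RTm → Finset RTm → Prop := Relation.ReflTransGen RRed

/-! # The resource multi-type system -/

mutual
/-- Resource typing judgement `Γ; Δ ⊢ s : α`. -/
inductive DerR : TEnv → VEnv → RTm → STy → Prop
  | ax (x : ℕ) (α : STy) (X : Finset ℕ) :
      DerR (Finsupp.single x {α}) (Finmap.singleton x X) (.var x) α
  | app {Γ₀ Γ₁ : TEnv} {Δ₀ Δ₁ : VEnv} {s : RTm} {b : RBag} {m : MTy} {β : STy} :
      DerR Γ₀ Δ₀ s (m.arr β) → DerRB Γ₁ Δ₁ b m → VEnv.Coh Δ₀ Δ₁ →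
      DerR (Γ₀ + Γ₁) (Δ₀ ∪ Δ₁) (.app s b) β
  | lam0 {Γ : TEnv} {Δ : VEnv} {x : ℕ} {X : Finset ℕ} {s : RTm} {β : STy} :
      Γ x = 0 → x ∉ Δ → DerR Γ (Δ.insert x X) s β →
      DerR Γ Δ (.lam x s) (.arr0 X β)
  | lamP {Γ : TEnv} {Δ : VEnv} {x : ℕ} {X : Finset ℕ} {s : RTm} {α : STy}
      {l : List STy} {β : STy} :
      Γ x = 0 → x ∉ Δ →
      DerR (Γ + Finsupp.single x (MTy.mk α l).toM) (Δ.insert x X) s β →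
      DerR Γ Δ (.lam x s) (.arrP α l β)
/-- Resource typing judgement `Γ; Δ ⊢! t̄ : ᾱ`. -/
inductive DerRB : TEnv → VEnv → RBag → MTy → Prop
  | bang0 {Δ : VEnv} : DerRB 0 Δ (.empty Δ.keys) (.empty Δ.uni)
  | one {Γ : TEnv} {Δ : VEnv} {t : RTm} {α : STy} :
      DerR Γ Δ t α → DerRB Γ Δ (.mk t []) (.mk α [])
  | cons {Γ₀ Γ₁ : TEnv} {Δ : VEnv} {t t' : RTm} {l : List RTm} {α α' : STy}
      {la : List STy} :
      DerR Γ₀ Δ t α → DerRB Γ₁ Δ (.mk t' l) (.mk α' la) →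
      DerRB (Γ₀ + Γ₁) Δ (.mk t (t' :: l)) (.mk α (α' :: la))
end

/-! # Taylor expansion -/

/-- `Taylor M s`: the resource term `s` belongs to the Taylor expansion `T(M)`. -/
inductive Taylor : Lam → RTm → Prop
  | var (x : ℕ) : Taylor (.var x) (.var x)
  | lam {M : Lam} {s : RTm} (x : ℕ) : Taylor M s → Taylor (.lam x M) (.lam x s)
  | app0 {M N : Lam} {s : RTm} : Taylor M s →
      Taylor (.app M N) (.app s (.empty N.fv))
  | appP {M N : Lam} {s t : RTm} {l : List RTm} :
      Taylor M s → Taylor N t → (∀ u ∈ l, Taylor N u) →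
      Taylor (.app M N) (.app s (.mk t l))

/-! # Miscellaneous constructions for the last statement -/

/-- The variable environment `Δ_id` mapping each `x ∈ s` to `{x}`. -/
def idEnv (s : Finset ℕ) : VEnv :=
  (s.sort (· ≤ ·)).foldr (fun x Δ => Δ.insert x ({x} : Finset ℕ)) ∅

/-- The term `y M₁ ⋯ Mₖ`. -/
def Lam.spineApp (y : ℕ) (l : List Lam) : Lam := l.foldl .app (.var y)

/-- The type `[]_{fv N₁} → ⋯ → []_{fv Nₖ} → a`. -/
def yTyRest (a : ℕ) : List Lam → STy
  | [] => .atom a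
  | N :: l => .arr0 N.fv (yTyRest a l)

/-- The type `[]_{fv M₁} → ⋯ → [α] → ⋯ → []_{fv Mₖ} → a`, with `[α]`
in the `i`-th argument position (0-based). -/
def yTy (α : STy) (a : ℕ) : List Lam → ℕ → STy
  | [], _ => .atom a
  | _ :: l, 0 => .arrP α [] (yTyRest a l)
  | N :: l, (i+1) => .arr0 N.fv (yTy α a l i)

/-! Forgetting the variable environment turns a derivation of `Γ; Δ ⊢ M : α` into one of a relevant
non-idempotent intersection type system. Conversely, in a λI-term every bound variable lies in the
domain of the environment that assigns `∅` to each free variable, and under that environment each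
annotation of an empty multiset has to be `∅`, so a derivation whose annotations are all `∅`
extends to the full system.

In the system without variable environments, a derivation of `M.substF σ` is the same as a
derivation of `M` together with one of `σ z` for every use of `z`, and the sizes add up. A head
step therefore removes exactly one abstraction rule from a derivation, and every derivation of its
result arises in this way. So a derivation of size `n` leaves room for at most `n` head steps;
conversely head normal forms are typable, since the arguments of the head variable may be typed by
empty multisets, and this typability travels back along head reduction. -/

namespace Lam

theorem freshVar_notMem (s : Finset ℕ) : freshVar s ∉ s := fun h =>
  (Nat.lt_succ_self (s.sup id)).not_ge (Finset.le_sup (f := id) h)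

theorem freshVar_biUnion_notMem {s t : Finset ℕ} {σ : ℕ → Lam} (h : s ⊆ t) :
    ∀ z ∈ s, freshVar (t.biUnion fun z => (σ z).fv) ∉ (σ z).fv := fun z hz hz' =>
  freshVar_notMem _ (Finset.mem_biUnion.2 ⟨z, h hz, hz'⟩)

theorem subst_eq_substF_update (M : Lam) (x : ℕ) (N : Lam) :
    M.subst x N = M.substF (Function.update var x N) :=
  congrArg M.substF (funext fun z => (Function.update_apply var x N z).symm)

end Lam

/-- `IsArrow 𝒳 s β γ`: the type `γ` is an arrow with source multiset `s` and target `β`, whose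
annotation lies in `𝒳` if `s` is empty. -/
inductive IsArrow (𝒳 : Set (Finset ℕ)) : Multiset STy → STy → STy → Prop
  | empty {X : Finset ℕ} (β : STy) : X ∈ 𝒳 → IsArrow 𝒳 0 β (.arr0 X β)
  | cons (α : STy) (l : List STy) (β : STy) :
      IsArrow 𝒳 (α ::ₘ (l : Multiset STy)) β (.arrP α l β)

namespace IsArrow

variable {𝒳 : Set (Finset ℕ)}

theorem unique {s s' : Multiset STy} {β β' γ : STy} (h : IsArrow 𝒳 s β γ)
    (h' : IsArrow 𝒳 s' β' γ) : s = s' ∧ β = β' := by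
  cases h <;> cases h' <;> exact ⟨rfl, rfl⟩

theorem exists_of_nonempty (h𝒳 : 𝒳.Nonempty) (s : Multiset STy) (β : STy) :
    ∃ γ, IsArrow 𝒳 s β γ := by
  obtain ⟨X, hX⟩ := h𝒳
  induction s using Quotient.inductionOn with
  | h l => cases l with
    | nil => exact ⟨_, .empty β hX⟩
    | cons α l => exact ⟨_, .cons α l β⟩

theorem toM_arr (m : MTy) (β : STy) : IsArrow Set.univ m.toM β (m.arr β) := by
  cases m with
  | empty X => exact .empty β (Set.mem_univ X)
  | mk α l => exact .cons α l β

end IsArrow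

/-- The multi-type system without variable environments: `Typing 𝒳 n Γ M α` states that `M` has
type `α` in `Γ` by a derivation of size `n`, the number of its abstraction rules, in which every
empty multiset introduced by an arrow rule is annotated by an element of `𝒳`. In the application
rule, `D` collects the sizes and the environments of the derivations of the argument. -/
inductive Typing (𝒳 : Set (Finset ℕ)) : ℕ → TEnv → Lam → STy → Prop
  | var (x : ℕ) (α : STy) : Typing 𝒳 0 (Finsupp.single x {α}) (.var x) α
  | app {n : ℕ} {Γ : TEnv} {M N : Lam} {s : Multiset STy} {β γ : STy}
      {D : Multiset (ℕ × TEnv)} :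
      IsArrow 𝒳 s β γ → Typing 𝒳 n Γ M γ →
      D.Rel (fun d j => Typing 𝒳 d.1 d.2 j.1 j.2) (s.map (Prod.mk N)) →
      Typing 𝒳 (n + D.sum.1) (Γ + D.sum.2) (.app M N) β
  | lam {n : ℕ} {Γ : TEnv} {x : ℕ} {M : Lam} {s : Multiset STy} {β γ : STy} :
      Γ x = 0 → IsArrow 𝒳 s β γ → Typing 𝒳 n (Γ + Finsupp.single x s) M β →
      Typing 𝒳 (n + 1) Γ (.lam x M) γ

/-- `SumTyping 𝒳 n Γ J`: the typing goals in the multiset `J` of pairs of a term and a type have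
derivations whose environments and sizes add up to `Γ` and `n`. -/
def SumTyping (𝒳 : Set (Finset ℕ)) (n : ℕ) (Γ : TEnv) (J : Multiset (Lam × STy)) : Prop :=
  ∃ D : Multiset (ℕ × TEnv), D.Rel (fun d j => Typing 𝒳 d.1 d.2 j.1 j.2) J ∧ D.sum = (n, Γ)

section

variable {𝒳 : Set (Finset ℕ)}

theorem sumTyping_zero_iff {n : ℕ} {Γ : TEnv} : SumTyping 𝒳 n Γ 0 ↔ n = 0 ∧ Γ = 0 := by
  simp only [SumTyping, Multiset.rel_zero_right, exists_eq_left, Multiset.sum_zero,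
    ← Prod.mk_zero_zero, Prod.mk.injEq, eq_comm]

theorem sumTyping_add_iff {n : ℕ} {Γ : TEnv} {J K : Multiset (Lam × STy)} :
    SumTyping 𝒳 n Γ (J + K) ↔ ∃ n₁ n₂ Γ₁ Γ₂, n = n₁ + n₂ ∧ Γ = Γ₁ + Γ₂ ∧
      SumTyping 𝒳 n₁ Γ₁ J ∧ SumTyping 𝒳 n₂ Γ₂ K := by
  simp only [SumTyping, Multiset.rel_add_right]
  constructor
  · rintro ⟨_, ⟨D, E, hD, hE, rfl⟩, h⟩
    rw [Multiset.sum_add] at h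
    exact ⟨D.sum.1, E.sum.1, D.sum.2, E.sum.2, (congrArg Prod.fst h).symm,
      (congrArg Prod.snd h).symm, ⟨D, hD, rfl⟩, ⟨E, hE, rfl⟩⟩
  · rintro ⟨n₁, n₂, Γ₁, Γ₂, rfl, rfl, ⟨D, hD, hD'⟩, ⟨E, hE, hE'⟩⟩
    exact ⟨D + E, ⟨D, E, hD, hE, rfl⟩, by rw [Multiset.sum_add, hD', hE', Prod.mk_add_mk]⟩

theorem sumTyping_singleton_iff {n : ℕ} {Γ : TEnv} {M : Lam} {α : STy} :
    SumTyping 𝒳 n Γ {(M, α)} ↔ Typing 𝒳 n Γ M α := by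
  constructor
  · rintro ⟨D, hD, h⟩
    obtain ⟨d, D', hd, hD', rfl⟩ := Multiset.rel_cons_right.1 hD
    rw [Multiset.rel_zero_right.1 hD', Multiset.sum_cons, Multiset.sum_zero, add_zero] at h
    rwa [h] at hd
  · exact fun h => ⟨{(n, Γ)}, Multiset.rel_cons_left.2 ⟨_, 0, h, .zero, rfl⟩,
      Multiset.sum_singleton _⟩

theorem sumTyping_cons_iff {n : ℕ} {Γ : TEnv} {M : Lam} {α : STy} {J : Multiset (Lam × STy)} :
    SumTyping 𝒳 n Γ ((M, α) ::ₘ J) ↔ ∃ n₁ n₂ Γ₁ Γ₂, n = n₁ + n₂ ∧ Γ = Γ₁ + Γ₂ ∧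
      Typing 𝒳 n₁ Γ₁ M α ∧ SumTyping 𝒳 n₂ Γ₂ J := by
  simp only [← Multiset.singleton_add, sumTyping_add_iff, sumTyping_singleton_iff]

theorem typing_var_iff {n : ℕ} {Γ : TEnv} {x : ℕ} {α : STy} :
    Typing 𝒳 n Γ (.var x) α ↔ n = 0 ∧ Γ = Finsupp.single x {α} := by
  constructor
  · rintro ⟨⟩
    exact ⟨rfl, rfl⟩
  · rintro ⟨rfl, rfl⟩
    exact .var x α

theorem typing_app_iff {n : ℕ} {Γ : TEnv} {M N : Lam} {β : STy} :
    Typing 𝒳 n Γ (.app M N) β ↔ ∃ s γ, IsArrow 𝒳 s β γ ∧ ∃ n₁ n₂ Γ₁ Γ₂, n = n₁ + n₂ ∧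
      Γ = Γ₁ + Γ₂ ∧ Typing 𝒳 n₁ Γ₁ M γ ∧ SumTyping 𝒳 n₂ Γ₂ (s.map (Prod.mk N)) := by
  constructor
  · rintro (_ | ⟨harrow, hM, hN⟩)
    exact ⟨_, _, harrow, _, _, _, _, rfl, rfl, hM, _, hN, rfl⟩
  · rintro ⟨s, γ, harrow, n₁, n₂, Γ₁, Γ₂, rfl, rfl, hM, D, hN, hD⟩
    simpa only [hD] using Typing.app harrow hM hN

theorem typing_lam_iff {n : ℕ} {Γ : TEnv} {x : ℕ} {M : Lam} {γ : STy} :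
    Typing 𝒳 n Γ (.lam x M) γ ↔ ∃ m s β, n = m + 1 ∧ Γ x = 0 ∧ IsArrow 𝒳 s β γ ∧
      Typing 𝒳 m (Γ + Finsupp.single x s) M β := by
  constructor
  · rintro (_ | _ | ⟨hx, harrow, hM⟩)
    exact ⟨_, _, _, rfl, hx, harrow, hM⟩
  · rintro ⟨m, s, β, rfl, hx, harrow, hM⟩
    exact .lam hx harrow hM

theorem SumTyping.apply_eq_zero {n : ℕ} {Γ : TEnv} {J : Multiset (Lam × STy)} {x : ℕ}
    (h : SumTyping 𝒳 n Γ J)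
    (hJ : ∀ j ∈ J, ∀ {m : ℕ} {Θ : TEnv}, Typing 𝒳 m Θ j.1 j.2 → Θ x = 0) : Γ x = 0 := by
  induction J using Multiset.induction_on generalizing n Γ with
  | empty => rw [(sumTyping_zero_iff.1 h).2, Finsupp.coe_zero, Pi.zero_apply]
  | cons j J ih =>
    obtain ⟨n₁, n₂, Γ₁, Γ₂, rfl, rfl, hj, hJ'⟩ := sumTyping_cons_iff.1 h
    rw [Finsupp.add_apply, hJ j (Multiset.mem_cons_self j J) hj,
      ih hJ' fun i hi => hJ i (Multiset.mem_cons_of_mem hi), add_zero]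

theorem Typing.apply_eq_zero {n : ℕ} {Γ : TEnv} {M : Lam} {α : STy} {x : ℕ}
    (h : Typing 𝒳 n Γ M α) (hx : x ∉ M.fv) : Γ x = 0 := by
  induction M generalizing n Γ α with
  | var y =>
    rw [(typing_var_iff.1 h).2]
    exact Finsupp.single_eq_of_ne (Finset.notMem_singleton.1 hx)
  | app M N ihM ihN =>
    obtain ⟨s, γ, -, n₁, n₂, Γ₁, Γ₂, rfl, rfl, hM, hN⟩ := typing_app_iff.1 h
    obtain ⟨hxM, hxN⟩ := Finset.notMem_union.1 hx
    rw [Finsupp.add_apply, ihM hM hxM, zero_add]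
    refine hN.apply_eq_zero fun j hj _ _ hj' => ?_
    obtain ⟨β, -, rfl⟩ := Multiset.mem_map.1 hj
    exact ihN hj' hxN
  | lam y M ih =>
    obtain ⟨m, s, β, -, hy, -, hM⟩ := typing_lam_iff.1 h
    by_cases hxy : x = y
    · rwa [hxy]
    · have hxM : x ∉ M.fv := fun hxM => hx (Finset.mem_erase.2 ⟨hxy, hxM⟩)
      exact (add_eq_zero.1 (ih hM hxM)).1

theorem Typing.support_subset_erase {n : ℕ} {Γ : TEnv} {x : ℕ} {s : Multiset STy} {M : Lam}
    {α : STy} (hx : Γ x = 0) (h : Typing 𝒳 n (Γ + Finsupp.single x s) M α) :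
    Γ.support ⊆ M.fv.erase x := by
  intro z hz
  refine Finset.mem_erase.2 ⟨fun hzx => Finsupp.mem_support_iff.1 hz (hzx ▸ hx), ?_⟩
  by_contra hzM
  exact Finsupp.mem_support_iff.1 hz (add_eq_zero.1 (h.apply_eq_zero hzM)).1

/-- The typing goals left by the substitution `σ` in a term typed in `Γ`: the term `σ z` at each
type that `Γ` assigns to `z`. -/
def goals (σ : ℕ → Lam) (Γ : TEnv) : Multiset (Lam × STy) :=
  Γ.sum fun z s => s.map (Prod.mk (σ z))

theorem goals_add (σ : ℕ → Lam) (Γ Θ : TEnv) : goals σ (Γ + Θ) = goals σ Γ + goals σ Θ :=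
  Finsupp.sum_add_index' (fun _ => Multiset.map_zero _) fun _ => Multiset.map_add _

theorem goals_single (σ : ℕ → Lam) (x : ℕ) (s : Multiset STy) :
    goals σ (Finsupp.single x s) = s.map (Prod.mk (σ x)) :=
  Finsupp.sum_single_index (Multiset.map_zero _)

theorem mem_goals {σ : ℕ → Lam} {Γ : TEnv} {j : Lam × STy} :
    j ∈ goals σ Γ ↔ ∃ z, ∃ α ∈ Γ z, (σ z, α) = j := by
  simp only [goals, Finsupp.sum, Multiset.mem_sum, Multiset.mem_map, Finsupp.mem_support_iff]
  refine exists_congr fun z => and_iff_right_of_imp ?_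
  rintro ⟨α, hα, -⟩ hz
  rw [hz] at hα
  exact Multiset.notMem_zero α hα

theorem goals_update_add_single {σ : ℕ → Lam} {Γ : TEnv} {x : ℕ} (hx : Γ x = 0) (N : Lam)
    (s : Multiset STy) :
    goals (Function.update σ x N) (Γ + Finsupp.single x s) = goals σ Γ + s.map (Prod.mk N) := by
  rw [goals_add, goals_single, Function.update_self]
  refine congrArg (· + _) (Finsupp.sum_congr fun z hz => ?_)
  have hzx : z ≠ x := by
    rintro rfl
    exact Finsupp.mem_support_iff.1 hz hx
  rw [Function.update_of_ne hzx]

theorem sumTyping_map_var_iff {n : ℕ} {Γ : TEnv} {x : ℕ} {s : Multiset STy} :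
    SumTyping 𝒳 n Γ (s.map (Prod.mk (.var x))) ↔ n = 0 ∧ Γ = Finsupp.single x s := by
  induction s using Multiset.induction_on generalizing n Γ with
  | empty => rw [Multiset.map_zero, sumTyping_zero_iff, Finsupp.single_zero]
  | cons α s ih =>
    simp only [Multiset.map_cons, sumTyping_cons_iff, typing_var_iff, ih]
    constructor
    · rintro ⟨n₁, n₂, Γ₁, Γ₂, rfl, rfl, ⟨rfl, rfl⟩, rfl, rfl⟩
      exact ⟨rfl, (Finsupp.single_add x {α} s).symm⟩
    · rintro ⟨rfl, rfl⟩
      exact ⟨0, 0, _, _, rfl, Finsupp.single_add x {α} s, ⟨rfl, rfl⟩, rfl, rfl⟩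

theorem sumTyping_goals_var_iff {n : ℕ} {Γ Θ : TEnv} :
    SumTyping 𝒳 n Θ (goals .var Γ) ↔ n = 0 ∧ Θ = Γ := by
  induction Γ using Finsupp.induction_linear generalizing n Θ with
  | zero => exact sumTyping_zero_iff
  | add Γ₁ Γ₂ ih₁ ih₂ =>
    simp only [goals_add, sumTyping_add_iff, ih₁, ih₂]
    constructor
    · rintro ⟨n₁, n₂, Θ₁, Θ₂, rfl, rfl, ⟨rfl, rfl⟩, rfl, rfl⟩
      exact ⟨rfl, rfl⟩
    · rintro ⟨rfl, rfl⟩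
      exact ⟨0, 0, Γ₁, Γ₂, rfl, rfl, ⟨rfl, rfl⟩, rfl, rfl⟩
  | single x s => rw [goals_single, sumTyping_map_var_iff]

theorem SumTyping.goals_apply_eq_zero {n : ℕ} {Γ Θ : TEnv} {σ : ℕ → Lam} {y : ℕ}
    (h : SumTyping 𝒳 n Θ (goals σ Γ)) (hy : ∀ z ∈ Γ.support, y ∉ (σ z).fv) : Θ y = 0 := by
  refine h.apply_eq_zero fun j hj _ _ hj' => ?_
  obtain ⟨z, α, hα, rfl⟩ := mem_goals.1 hj
  refine hj'.apply_eq_zero (hy z (Finsupp.mem_support_iff.2 fun hz => ?_))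
  rw [hz] at hα
  exact Multiset.notMem_zero α hα

theorem TEnv.add_single_inj {Γ Θ : TEnv} {x : ℕ} {s t : Multiset STy} (hΓ : Γ x = 0)
    (hΘ : Θ x = 0) : Γ + Finsupp.single x s = Θ + Finsupp.single x t ↔ Γ = Θ ∧ s = t := by
  refine ⟨fun h => ?_, fun h => by rw [h.1, h.2]⟩
  have hst : s = t := by
    simpa only [Finsupp.add_apply, Finsupp.single_eq_same, hΓ, hΘ, zero_add] using
      DFunLike.congr_fun h x
  exact ⟨add_right_cancel (hst ▸ h), hst⟩

theorem TEnv.exists_eq_add_single (Γ : TEnv) (x : ℕ) :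
    ∃ (Γ₀ : TEnv) (s : Multiset STy), Γ₀ x = 0 ∧ Γ = Γ₀ + Finsupp.single x s :=
  ⟨Γ.erase x, Γ x, Finsupp.erase_same, (Finsupp.erase_add_single x Γ).symm⟩

theorem sumTyping_goals_update_var_iff {n : ℕ} {Γ Θ : TEnv} {σ : ℕ → Lam} {x y : ℕ}
    {s t : Multiset STy} (hx : Γ x = 0) (hΘ : Θ y = 0) (hy : ∀ z ∈ Γ.support, y ∉ (σ z).fv) :
    SumTyping 𝒳 n (Θ + Finsupp.single y s)
        (goals (Function.update σ x (.var y)) (Γ + Finsupp.single x t)) ↔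
      SumTyping 𝒳 n Θ (goals σ Γ) ∧ s = t := by
  simp only [goals_update_add_single hx, sumTyping_add_iff, sumTyping_map_var_iff]
  constructor
  · rintro ⟨n₁, n₂, Θ₁, Θ₂, rfl, h, h₁, rfl, rfl⟩
    obtain ⟨rfl, rfl⟩ := (TEnv.add_single_inj hΘ (h₁.goals_apply_eq_zero hy)).1 h
    exact ⟨h₁, rfl⟩
  · rintro ⟨h, rfl⟩
    exact ⟨n, 0, Θ, _, rfl, rfl, h, rfl, rfl⟩

theorem exists_sumTyping_goals_add_iff {σ : ℕ → Lam} {P Q : ℕ → TEnv → Prop} {n : ℕ} {Θ : TEnv} :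
    (∃ m k Γ, n = m + k ∧ (∃ m₁ m₂ Γ₁ Γ₂, m = m₁ + m₂ ∧ Γ = Γ₁ + Γ₂ ∧ P m₁ Γ₁ ∧ Q m₂ Γ₂) ∧
        SumTyping 𝒳 k Θ (goals σ Γ)) ↔
      ∃ n₁ n₂ Θ₁ Θ₂, n = n₁ + n₂ ∧ Θ = Θ₁ + Θ₂ ∧
        (∃ m k Γ, n₁ = m + k ∧ P m Γ ∧ SumTyping 𝒳 k Θ₁ (goals σ Γ)) ∧
        ∃ m k Γ, n₂ = m + k ∧ Q m Γ ∧ SumTyping 𝒳 k Θ₂ (goals σ Γ) := by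
  constructor
  · rintro ⟨_, k, _, rfl, ⟨m₁, m₂, Γ₁, Γ₂, rfl, rfl, hP, hQ⟩, h⟩
    rw [goals_add, sumTyping_add_iff] at h
    obtain ⟨k₁, k₂, Θ₁, Θ₂, rfl, rfl, h₁, h₂⟩ := h
    exact ⟨m₁ + k₁, m₂ + k₂, Θ₁, Θ₂, add_add_add_comm .., rfl, ⟨m₁, k₁, Γ₁, rfl, hP, h₁⟩,
      m₂, k₂, Γ₂, rfl, hQ, h₂⟩
  · rintro ⟨_, _, Θ₁, Θ₂, rfl, rfl, ⟨m₁, k₁, Γ₁, rfl, hP, h₁⟩, m₂, k₂, Γ₂, rfl, hQ, h₂⟩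
    refine ⟨m₁ + m₂, k₁ + k₂, Γ₁ + Γ₂, add_add_add_comm ..,
      ⟨m₁, m₂, Γ₁, Γ₂, rfl, rfl, hP, hQ⟩, ?_⟩
    exact goals_add σ Γ₁ Γ₂ ▸ sumTyping_add_iff.2 ⟨k₁, k₂, Θ₁, Θ₂, rfl, rfl, h₁, h₂⟩

theorem sumTyping_map_substF_iff {N : Lam} {σ : ℕ → Lam}
    (hN : ∀ {n : ℕ} {Θ : TEnv} {α : STy}, Typing 𝒳 n Θ (N.substF σ) α ↔
      ∃ m k Γ, n = m + k ∧ Typing 𝒳 m Γ N α ∧ SumTyping 𝒳 k Θ (goals σ Γ))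
    {n : ℕ} {Θ : TEnv} {s : Multiset STy} :
    SumTyping 𝒳 n Θ (s.map (Prod.mk (N.substF σ))) ↔
      ∃ m k Γ, n = m + k ∧ SumTyping 𝒳 m Γ (s.map (Prod.mk N)) ∧
        SumTyping 𝒳 k Θ (goals σ Γ) := by
  induction s using Multiset.induction_on generalizing n Θ with
  | empty =>
    simp only [Multiset.map_zero, sumTyping_zero_iff]
    constructor
    · rintro ⟨rfl, rfl⟩
      exact ⟨0, 0, 0, rfl, ⟨rfl, rfl⟩, sumTyping_zero_iff.2 ⟨rfl, rfl⟩⟩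
    · rintro ⟨m, k, Γ, rfl, ⟨rfl, rfl⟩, h⟩
      obtain ⟨rfl, rfl⟩ := sumTyping_zero_iff.1 h
      exact ⟨rfl, rfl⟩
  | cons α s ih =>
    simp only [Multiset.map_cons, sumTyping_cons_iff, hN, ih, exists_sumTyping_goals_add_iff]

theorem typing_substF_iff {n : ℕ} {Θ : TEnv} {M : Lam} {σ : ℕ → Lam} {α : STy} :
    Typing 𝒳 n Θ (M.substF σ) α ↔
      ∃ m k Γ, n = m + k ∧ Typing 𝒳 m Γ M α ∧ SumTyping 𝒳 k Θ (goals σ Γ) := by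
  induction M generalizing n Θ σ α with
  | var x =>
    simp only [Lam.substF, typing_var_iff]
    constructor
    · exact fun h => ⟨0, n, _, (zero_add n).symm, ⟨rfl, rfl⟩,
        goals_single σ x {α} ▸ sumTyping_singleton_iff.2 h⟩
    · rintro ⟨_, k, _, rfl, ⟨rfl, rfl⟩, h⟩
      rw [goals_single, Multiset.map_singleton, sumTyping_singleton_iff] at h
      rwa [zero_add]
  | app M N ihM ihN =>
    simp only [Lam.substF, typing_app_iff, ihM, sumTyping_map_substF_iff ihN,
      ← exists_sumTyping_goals_add_iff]
    constructor
    · rintro ⟨s, γ, harrow, m, k, Γ, rfl, h, hgoals⟩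
      exact ⟨m, k, Γ, rfl, ⟨s, γ, harrow, h⟩, hgoals⟩
    · rintro ⟨m, k, Γ, rfl, ⟨s, γ, harrow, h⟩, hgoals⟩
      exact ⟨s, γ, harrow, m, k, Γ, rfl, h, hgoals⟩
  | lam x M ih =>
    simp only [Lam.substF, typing_lam_iff, ih]
    constructor
    · rintro ⟨_, s, β, rfl, hΘ, harrow, m, k, Γ', rfl, hM, hgoals⟩
      obtain ⟨Γ, t, hΓ, rfl⟩ := TEnv.exists_eq_add_single Γ' x
      have hsupp : Γ.support ⊆ M.fv.erase x := Typing.support_subset_erase hΓ hM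
      obtain ⟨hgoals', rfl⟩ := (sumTyping_goals_update_var_iff hΓ hΘ
        (Lam.freshVar_biUnion_notMem hsupp)).1 hgoals
      exact ⟨m + 1, k, Γ, Nat.add_right_comm m k 1, ⟨m, s, β, rfl, hΓ, harrow, hM⟩, hgoals'⟩
    · rintro ⟨_, k, Γ, rfl, ⟨m, s, β, rfl, hΓ, harrow, hM⟩, hgoals⟩
      have hfresh := Lam.freshVar_biUnion_notMem (σ := σ) (Typing.support_subset_erase hΓ hM)
      have hΘ := hgoals.goals_apply_eq_zero hfresh
      exact ⟨m + k, s, β, Nat.add_right_comm m 1 k, hΘ, harrow, m, k, _, rfl, hM,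
        (sumTyping_goals_update_var_iff hΓ hΘ hfresh).2 ⟨hgoals, rfl⟩⟩

theorem typing_beta_iff (h𝒳 : 𝒳.Nonempty) {n : ℕ} {Γ : TEnv} {x : ℕ} {M N : Lam} {α : STy} :
    Typing 𝒳 n Γ (.app (.lam x M) N) α ↔ ∃ m, n = m + 1 ∧ Typing 𝒳 m Γ (M.subst x N) α := by
  simp only [Lam.subst_eq_substF_update, typing_substF_iff]
  constructor
  · intro h
    obtain ⟨s, γ, harrow, _, k, Γ₁, Γ₂, rfl, rfl, hlam, hN⟩ := typing_app_iff.1 h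
    obtain ⟨m, s', β', rfl, hx, harrow', hM⟩ := typing_lam_iff.1 hlam
    obtain ⟨rfl, rfl⟩ := harrow.unique harrow'
    refine ⟨m + k, Nat.add_right_comm m 1 k, m, k, _, rfl, hM, ?_⟩
    rw [goals_update_add_single hx, sumTyping_add_iff]
    exact ⟨0, k, Γ₁, Γ₂, (Nat.zero_add k).symm, rfl, sumTyping_goals_var_iff.2 ⟨rfl, rfl⟩, hN⟩
  · rintro ⟨_, rfl, m, k, Θ, rfl, hM, hgoals⟩
    obtain ⟨Γ₁, s, hx, rfl⟩ := TEnv.exists_eq_add_single Θ x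
    rw [goals_update_add_single hx, sumTyping_add_iff] at hgoals
    obtain ⟨k₁, k₂, Θ₁, Γ₂, rfl, rfl, hvar, hN⟩ := hgoals
    obtain ⟨rfl, rfl⟩ := sumTyping_goals_var_iff.1 hvar
    obtain ⟨γ, harrow⟩ := IsArrow.exists_of_nonempty h𝒳 s α
    refine typing_app_iff.2 ⟨s, γ, harrow, m + 1, k₂, Θ₁, Γ₂, ?_, rfl, .lam hx harrow hM, hN⟩
    rw [Nat.zero_add, Nat.add_right_comm]

theorem typing_head_iff (h𝒳 : 𝒳.Nonempty) {n : ℕ} {Γ : TEnv} {M M' : Lam} {α : STy}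
    (h : Head M M') : Typing 𝒳 n Γ M α ↔ ∃ m, n = m + 1 ∧ Typing 𝒳 m Γ M' α := by
  induction h generalizing n Γ α with
  | beta x M N => exact typing_beta_iff h𝒳
  | app N _ _ ih =>
    simp only [typing_app_iff, ih]
    constructor
    · rintro ⟨s, γ, harrow, _, k, Γ₁, Γ₂, rfl, rfl, ⟨m, rfl, hM⟩, hN⟩
      exact ⟨m + k, Nat.add_right_comm m 1 k, s, γ, harrow, m, k, Γ₁, Γ₂, rfl, rfl, hM, hN⟩
    · rintro ⟨_, rfl, s, γ, harrow, m, k, Γ₁, Γ₂, rfl, rfl, hM, hN⟩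
      exact ⟨s, γ, harrow, m + 1, k, Γ₁, Γ₂, Nat.add_right_comm m k 1, rfl, ⟨m, rfl, hM⟩, hN⟩
  | lam x _ ih =>
    simp only [typing_lam_iff, ih]
    constructor
    · rintro ⟨_, s, β, rfl, hx, harrow, m, rfl, hM⟩
      exact ⟨m + 1, rfl, m, s, β, rfl, hx, harrow, hM⟩
    · rintro ⟨_, rfl, m, s, β, rfl, hx, harrow, hM⟩
      exact ⟨m + 1, s, β, rfl, hx, harrow, m, rfl, hM⟩

theorem exists_head_or_hnf (M : Lam) : (∃ M', Head M M') ∨ Hnf M := by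
  induction M with
  | var x => exact .inr (.neutral (.var x))
  | lam x M ih => exact ih.imp (fun ⟨M', h⟩ => ⟨_, .lam x h⟩) (.lam x)
  | app M N ih =>
    by_cases habs : M.isAbs
    · cases M with
      | lam x M => exact .inl ⟨_, .beta x M N⟩
      | _ => exact habs.elim
    · rcases ih with ⟨M', h⟩ | h
      · exact .inl ⟨_, .app N habs h⟩
      · cases h with
        | neutral h => exact .inr (.neutral (.app N h))
        | lam x h => exact absurd trivial habs

theorem Typing.hasHnf (h𝒳 : 𝒳.Nonempty) {n : ℕ} {Γ : TEnv} {M : Lam} {α : STy}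
    (h : Typing 𝒳 n Γ M α) : HasHnf M := by
  induction n using Nat.strong_induction_on generalizing M with
  | h n ih =>
    rcases exists_head_or_hnf M with ⟨M', hM'⟩ | hM
    · obtain ⟨m, rfl, h'⟩ := (typing_head_iff h𝒳 hM').1 h
      obtain ⟨H, hred, hH⟩ := ih m m.lt_succ_self h'
      exact ⟨H, .head hM' hred, hH⟩
    · exact ⟨M, .refl, hM⟩

theorem Neutral.exists_typing (h𝒳 : 𝒳.Nonempty) {M : Lam} (hM : Neutral M) (α : STy) :
    ∃ n Γ, Typing 𝒳 n Γ M α := by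
  induction hM generalizing α with
  | var x => exact ⟨0, _, .var x α⟩
  | app N _ ih =>
    obtain ⟨γ, harrow⟩ := IsArrow.exists_of_nonempty h𝒳 0 α
    obtain ⟨n, Γ, h⟩ := ih γ
    exact ⟨n, Γ, typing_app_iff.2 ⟨0, γ, harrow, n, 0, Γ, 0, (add_zero n).symm, (add_zero Γ).symm,
      h, sumTyping_zero_iff.2 ⟨rfl, rfl⟩⟩⟩

theorem Hnf.exists_typing (h𝒳 : 𝒳.Nonempty) {M : Lam} (hM : Hnf M) :
    ∃ n Γ α, Typing 𝒳 n Γ M α := by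
  induction hM with
  | neutral h =>
    obtain ⟨n, Γ, h'⟩ := h.exists_typing h𝒳 (.atom 0)
    exact ⟨n, Γ, _, h'⟩
  | lam x _ ih =>
    obtain ⟨n, Γ, β, h⟩ := ih
    obtain ⟨Γ₀, s, hx, rfl⟩ := TEnv.exists_eq_add_single Γ x
    obtain ⟨γ, harrow⟩ := IsArrow.exists_of_nonempty h𝒳 s β
    exact ⟨n + 1, Γ₀, γ, .lam hx harrow h⟩

theorem HasHnf.exists_typing (h𝒳 : 𝒳.Nonempty) {M : Lam} (hM : HasHnf M) :
    ∃ n Γ α, Typing 𝒳 n Γ M α := by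
  obtain ⟨H, hred, hH⟩ := hM
  induction hred using Relation.ReflTransGen.head_induction_on with
  | refl => exact hH.exists_typing h𝒳
  | head hstep _ ih =>
    obtain ⟨n, Γ, α, h⟩ := ih
    exact ⟨n + 1, Γ, α, (typing_head_iff h𝒳 hstep).2 ⟨n, rfl, h⟩⟩

end

mutual

theorem Der.exists_typing {Γ : TEnv} {Δ : VEnv} {M : Lam} {α : STy}
    (h : Der Γ Δ M (.simple α)) : ∃ n, Typing Set.univ n Γ M α :=
  match h with
  | .ax x α _ => ⟨0, .var x α⟩
  | .app (m := m) (β := β) hM hN _ => by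
    obtain ⟨n₁, hM'⟩ := hM.exists_typing
    obtain ⟨n₂, hN'⟩ := hN.exists_sumTyping
    exact ⟨n₁ + n₂, typing_app_iff.2 ⟨_, _, .toM_arr m β, n₁, n₂, _, _, rfl, rfl, hM', hN'⟩⟩
  | .lam0 (X := X) (β := β) hx _ hM => by
    obtain ⟨n, hM'⟩ := hM.exists_typing
    refine ⟨n + 1, .lam hx (.empty β (Set.mem_univ X)) ?_⟩
    rwa [Finsupp.single_zero, add_zero]
  | .lamP hx _ hM => by
    obtain ⟨n, hM'⟩ := hM.exists_typing
    exact ⟨n + 1, .lam hx (.cons ..) hM'⟩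

theorem DerB.exists_sumTyping {Γ : TEnv} {Δ : VEnv} {N : Lam} {m : MTy} (h : DerB Γ Δ N m) :
    ∃ n, SumTyping Set.univ n Γ (m.toM.map (Prod.mk N)) :=
  match h with
  | .bang0 _ => ⟨0, sumTyping_zero_iff.2 ⟨rfl, rfl⟩⟩
  | .one hN => by
    obtain ⟨n, hN'⟩ := hN.exists_typing
    exact ⟨n, sumTyping_singleton_iff.2 hN'⟩
  | .cons hN hl => by
    obtain ⟨n₁, hN'⟩ := hN.exists_typing
    obtain ⟨n₂, hl'⟩ := hl.exists_sumTyping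
    exact ⟨n₁ + n₂, sumTyping_cons_iff.2 ⟨n₁, n₂, _, _, rfl, rfl, hN', hl'⟩⟩

end

namespace VEnv

/-- The variable environment with domain `s` that maps every variable to `∅`. -/
def blank (s : Finset ℕ) : VEnv :=
  Finmap.keysLookupEquiv.symm ⟨(s, fun z => if z ∈ s then some ∅ else none), fun z => by
    by_cases hz : z ∈ s <;> simp [hz]⟩

@[simp]
theorem keys_blank (s : Finset ℕ) : (blank s).keys = s :=
  Finmap.keysLookupEquiv_symm_apply_keys _

@[simp]
theorem lookup_blank (s : Finset ℕ) (z : ℕ) :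
    (blank s).lookup z = if z ∈ s then some ∅ else none :=
  Finmap.keysLookupEquiv_symm_apply_lookup _ z

theorem mem_blank {s : Finset ℕ} {z : ℕ} : z ∈ blank s ↔ z ∈ s := by
  rw [← Finmap.mem_keys, keys_blank]

theorem uni_blank (s : Finset ℕ) : (blank s).uni = ∅ := by
  refine Finset.eq_empty_of_forall_notMem fun y hy => ?_
  obtain ⟨z, hz, hyz⟩ := Finset.mem_biUnion.1 hy
  rw [keys_blank] at hz
  simp [hz] at hyz

theorem blank_singleton (x : ℕ) : blank {x} = Finmap.singleton x ∅ := by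
  refine Finmap.ext_lookup fun z => ?_
  obtain rfl | hz := eq_or_ne z x
  · simp [Finmap.lookup_singleton_eq]
  · simp [hz, Finmap.lookup_eq_none.2 (mt (Finmap.mem_singleton z x _).1 hz)]

theorem blank_union (s t : Finset ℕ) : blank (s ∪ t) = blank s ∪ blank t := by
  refine Finmap.ext_lookup fun z => ?_
  by_cases hz : z ∈ s
  · simp [hz, Finmap.lookup_union_left (mem_blank.2 hz)]
  · simp [hz, Finmap.lookup_union_right (mt mem_blank.1 hz)]

theorem insert_blank_erase {s : Finset ℕ} {x : ℕ} (hx : x ∈ s) :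
    (blank (s.erase x)).insert x ∅ = blank s := by
  refine Finmap.ext_lookup fun z => ?_
  obtain rfl | hz := eq_or_ne z x
  · simp [hx, Finmap.lookup_insert]
  · simp [hz, Finmap.lookup_insert_of_ne]

theorem coh_blank (s t : Finset ℕ) : Coh (blank s) (blank t) := fun z hs ht => by
  simp [mem_blank.1 hs, mem_blank.1 ht]

end VEnv

theorem SumTyping.derB {𝒳 : Set (Finset ℕ)} {n : ℕ} {Γ : TEnv} {N : Lam} {Δ : VEnv}
    (hN : ∀ {n : ℕ} {Γ : TEnv} {α : STy}, Typing 𝒳 n Γ N α → Der Γ Δ N (.simple α))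
    {α : STy} {l : List STy}
    (h : SumTyping 𝒳 n Γ ((α ::ₘ (l : Multiset STy)).map (Prod.mk N))) :
    DerB Γ Δ N (.mk α l) := by
  rw [Multiset.map_cons] at h
  induction l generalizing n Γ α with
  | nil => exact .one (hN (sumTyping_singleton_iff.1 h))
  | cons α' l ih =>
    obtain ⟨n₁, n₂, Γ₁, Γ₂, -, rfl, hα, hl⟩ := sumTyping_cons_iff.1 h
    rw [← Multiset.cons_coe, Multiset.map_cons] at hl
    exact .cons (hN hα) (ih hl)

theorem Typing.der {n : ℕ} {Γ : TEnv} {M : Lam} {α : STy} (h : Typing {∅} n Γ M α)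
    (hM : M.IsI) : Der Γ (.blank M.fv) M (.simple α) := by
  induction M generalizing n Γ α with
  | var x =>
    obtain ⟨-, rfl⟩ := typing_var_iff.1 h
    exact VEnv.blank_singleton x ▸ .ax x α ∅
  | app M N ihM ihN =>
    obtain ⟨s, γ, harrow, n₁, n₂, Γ₁, Γ₂, -, rfl, hM', hN⟩ := typing_app_iff.1 h
    have hDer := ihM hM' hM.1
    have hcoh := VEnv.coh_blank M.fv N.fv
    rw [Lam.fv, VEnv.blank_union]
    cases harrow with
    | @empty X β hX =>
      obtain rfl := Set.mem_singleton_iff.1 hX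
      obtain ⟨-, rfl⟩ := sumTyping_zero_iff.1 hN
      have hDerB := DerB.bang0 (VEnv.keys_blank N.fv)
      rw [VEnv.uni_blank] at hDerB
      exact .app (m := .empty ∅) hDer hDerB hcoh
    | cons α l β => exact .app (m := .mk α l) hDer (hN.derB fun h => ihN h hM.2) hcoh
  | lam x M ih =>
    obtain ⟨m, s, β, -, hx, harrow, hM'⟩ := typing_lam_iff.1 h
    have hDer := ih hM' hM.2
    have hxΔ : x ∉ VEnv.blank (M.fv.erase x) :=
      mt VEnv.mem_blank.1 (Finset.notMem_erase x M.fv)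
    rw [← VEnv.insert_blank_erase hM.1] at hDer
    cases harrow with
    | empty β hX =>
      obtain rfl := Set.mem_singleton_iff.1 hX
      rw [Finsupp.single_zero, add_zero] at hDer
      exact .lam0 hx hxΔ hDer
    | cons α l β => exact .lamP hx hxΔ hDer

/-- typability with a simple type characterizes having a
head normal form. -/
theorem stmt14 (M : Lam) (hM : M.IsI) :
    (∃ (Γ : TEnv) (Δ : VEnv) (α : STy), Der Γ Δ M (.simple α)) ↔ HasHnf M := by
  constructor
  · rintro ⟨Γ, Δ, α, h⟩
    obtain ⟨n, h'⟩ := h.exists_typing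
    exact h'.hasHnf Set.univ_nonempty
  · intro h
    obtain ⟨n, Γ, α, h'⟩ := h.exists_typing (Set.singleton_nonempty ∅)
    exact ⟨Γ, .blank M.fv, α, h'.der hM⟩
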